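/- arXiv:1610.02290 — 2 statements merged into one kernel-verified Lean document; each statement's English description precedes it below -/
import Mathlib

section
/- Let (V, μ, α, β) be a BiHom-superalgebra over a field k with α and β bijective, and let [x, y] = xy − (−1)^{|x||y|} (α⁻¹(β(y)))(α(β⁻¹(x))) be the associated supercommutator. Then for all homogeneous x, y, z ∈ V: (−1)^{|x||z|}[β²(x), [β(y), α(z)]] + (−1)^{|y||x|}[β²(y), [β(z), α(x)]] + (−1)^{|z||y|}[β²(z), [β(x), α(y)]] = (−1)^{|x||z|} as_{α,β}(α⁻¹β²(x), β(y), α(z)) + (−1)^{|x||y|} as_{α,β}(α⁻¹β²(y), β(z), α(x)) + (−1)^{|z||y|} as_{α,β}(α⁻¹β²(z), β(x), α(y)) − (−1)^{|x||z|+|z||y|} as_{α,β}(α⁻¹β²(x), β(z), α(y)) − (−1)^{|x||y|+|z||y|} as_{α,β}(α⁻¹β²(z), β(y), α(x)) − (−1)^{|x||y|+|z||x|} as_{α,β}(α⁻¹β²(y), β(x), α(z)). (Lemma 3.4) -/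
/-- The supercommutator of a BiHom-superalgebra with bijective structure maps `α`, `β`,
on elements of parities `i`, `j`:
`[x, y] = x·y − (−1)^{|x||y|} (α⁻¹(β(y)))·(α(β⁻¹(x)))`. -/
noncomputable def superComm {K : Type*} [Field K] {A : Type*} [AddCommGroup A] [Module K A]
    (μ : A →ₗ[K] A →ₗ[K] A) (α β : A ≃ₗ[K] A) (i j : ZMod 2) (x y : A) : A :=
  μ x y - ((-1 : K) ^ (i.val * j.val)) • μ (α.symm (β y)) (α (β.symm x))

/-- The `(α,β)`-associator `as_{α,β}(x, y, z) = α(x)(yz) − (xy)β(z)`. -/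
noncomputable def biAssoc {K : Type*} [Field K] {A : Type*} [AddCommGroup A] [Module K A]
    (μ : A →ₗ[K] A →ₗ[K] A) (α β : A ≃ₗ[K] A) (x y z : A) : A :=
  μ (α x) (μ y z) - μ (μ x y) (β z)

/-!
On elements of the form `β x`, `α y` the supercommutator is an ordinary super-antisymmetrization:
`[β x, α y] = (β x)(α y) − (−1)^{|x||y|} (β y)(α x)`. Hence each nested bracket
`[β² x, [β y, α z]]` is a signed sum of four terms, each of which is one half of an associator
`as(α⁻¹β² a, β b, α c) = (β² a)((β b)(α c)) − ((α⁻¹β² a)(β b))(βα c)` for a permutation `(a, b, c)`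
of `(x, y, z)`. The cyclic sum runs through all twelve halves, and bimultiplicativity of the sign
`(−1)^{|x||y|}` makes the two halves of each associator appear with opposite coefficients.
-/

theorem neg_one_pow_val_mul_val_add {R : Type*} [Ring R] (i j l : ZMod 2) :
    (-1 : R) ^ (i.val * (j + l).val) = (-1) ^ (i.val * j.val) * (-1) ^ (i.val * l.val) := by
  rw [← pow_add, ← mul_add, ZMod.val_add, neg_one_pow_eq_pow_mod_two, Nat.mul_mod_mod,
    ← neg_one_pow_eq_pow_mod_two]

section BiHom

variable {K : Type*} [Field K] {A : Type*} [AddCommGroup A] [Module K A]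
  (μ : A →ₗ[K] A →ₗ[K] A) {α β : A ≃ₗ[K] A}

theorem biAssoc_symm_apply (x y z : A) :
    biAssoc μ α β (α.symm x) y z = μ x (μ y z) - μ (μ (α.symm x) y) (β z) := by
  rw [biAssoc, LinearEquiv.apply_symm_apply]

theorem superComm_sub_right (i j : ZMod 2) (x y z : A) :
    superComm μ α β i j x (y - z) = superComm μ α β i j x y - superComm μ α β i j x z := by
  simp only [superComm, map_sub, LinearMap.sub_apply, smul_sub]
  abel

theorem superComm_smul_right (i j : ZMod 2) (c : K) (x y : A) :
    superComm μ α β i j x (c • y) = c • superComm μ α β i j x y := by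
  simp only [superComm, map_smul, LinearMap.smul_apply, smul_sub, smul_comm c]

theorem superComm_apply_apply (hαβ : Function.Commute α β) (i j : ZMod 2) (x y : A) :
    superComm μ α β i j (β x) (α y) =
      μ (β x) (α y) - (-1 : K) ^ (i.val * j.val) • μ (β y) (α x) := by
  rw [superComm, ← hαβ y, LinearEquiv.symm_apply_apply, LinearEquiv.symm_apply_apply]

variable {μ}

theorem superComm_apply_apply_mul (hαβ : Function.Commute α β)
    (hα : ∀ a b, α (μ a b) = μ (α a) (α b)) (hβ : ∀ a b, β (μ a b) = μ (β a) (β b))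
    (i j : ZMod 2) (x y z : A) :
    superComm μ α β i j (β x) (μ (β y) (α z)) =
      μ (β x) (μ (β y) (α z)) -
        (-1 : K) ^ (i.val * j.val) • μ (μ (α.symm (β (β y))) (β z)) (α x) := by
  have symm_mul : α.symm (β (μ (β y) (α z))) = μ (α.symm (β (β y))) (β z) := by
    rw [LinearEquiv.symm_apply_eq, hα, LinearEquiv.apply_symm_apply, hαβ, hβ]
  rw [superComm, symm_mul, LinearEquiv.symm_apply_apply]

theorem neg_one_pow_smul_superComm_superComm (hαβ : Function.Commute α β)
    (hα : ∀ a b, α (μ a b) = μ (α a) (α b)) (hβ : ∀ a b, β (μ a b) = μ (β a) (β b))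
    (i j l : ZMod 2) (x y z : A) :
    (-1 : K) ^ (i.val * l.val) •
        superComm μ α β i (j + l) (β (β x)) (superComm μ α β j l (β y) (α z)) =
      (-1 : K) ^ (i.val * l.val) •
          (μ (β (β x)) (μ (β y) (α z))
            - (-1 : K) ^ (j.val * l.val) • μ (β (β x)) (μ (β z) (α y)))
        - (-1 : K) ^ (i.val * j.val) •
          (μ (μ (α.symm (β (β y))) (β z)) (β (α x))
            - (-1 : K) ^ (j.val * l.val) • μ (μ (α.symm (β (β z))) (β y)) (β (α x))) := by
  have sign_mul : (-1 : K) ^ (i.val * l.val) * (-1) ^ (i.val * (j + l).val) =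
      (-1) ^ (i.val * j.val) := by
    rw [neg_one_pow_val_mul_val_add, mul_left_comm, pow_mul_pow_eq_one _ (by norm_num), mul_one]
  rw [superComm_apply_apply μ hαβ, superComm_sub_right, superComm_smul_right,
    superComm_apply_apply_mul hαβ hα hβ, superComm_apply_apply_mul hαβ hα hβ, hαβ x,
    ← sign_mul]
  module

theorem jacobi_sum_eq_associator_sum_general (hαβ : Function.Commute α β)
    (hα : ∀ a b, α (μ a b) = μ (α a) (α b)) (hβ : ∀ a b, β (μ a b) = μ (β a) (β b))
    (i j l : ZMod 2) (x y z : A) :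
      ((-1 : K) ^ (i.val * l.val)) •
          superComm μ α β i (j + l) (β (β x)) (superComm μ α β j l (β y) (α z))
        + ((-1 : K) ^ (j.val * i.val)) •
          superComm μ α β j (l + i) (β (β y)) (superComm μ α β l i (β z) (α x))
        + ((-1 : K) ^ (l.val * j.val)) •
          superComm μ α β l (i + j) (β (β z)) (superComm μ α β i j (β x) (α y))
      = ((-1 : K) ^ (i.val * l.val)) • biAssoc μ α β (α.symm (β (β x))) (β y) (α z)
        + ((-1 : K) ^ (i.val * j.val)) • biAssoc μ α β (α.symm (β (β y))) (β z) (α x)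
        + ((-1 : K) ^ (l.val * j.val)) • biAssoc μ α β (α.symm (β (β z))) (β x) (α y)
        - ((-1 : K) ^ (i.val * l.val + l.val * j.val)) •
            biAssoc μ α β (α.symm (β (β x))) (β z) (α y)
        - ((-1 : K) ^ (i.val * j.val + l.val * j.val)) •
            biAssoc μ α β (α.symm (β (β z))) (β y) (α x)
        - ((-1 : K) ^ (i.val * j.val + l.val * i.val)) •
            biAssoc μ α β (α.symm (β (β y))) (β x) (α z) := by
  rw [neg_one_pow_smul_superComm_superComm hαβ hα hβ i,
    neg_one_pow_smul_superComm_superComm hαβ hα hβ j,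
    neg_one_pow_smul_superComm_superComm hαβ hα hβ l]
  simp only [biAssoc_symm_apply, pow_add, mul_comm j.val i.val, mul_comm l.val i.val,
    mul_comm l.val j.val]
  module

end BiHom

/-- **Lemma 3.4.** In a BiHom-superalgebra with bijective `α`, `β`, the cyclic
BiHom-superJacobi sum of the supercommutator equals the stated signed combination of
six `(α,β)`-associators, for all homogeneous `x`, `y`, `z`. -/
theorem jacobi_sum_eq_associator_sum
    (K : Type*) [Field K] (V : Type*) [AddCommGroup V] [Module K V]
    (𝒜 : ZMod 2 → Submodule K V) [DirectSum.Decomposition 𝒜]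
    (μ : V →ₗ[K] V →ₗ[K] V) (α β : V ≃ₗ[K] V)
    (hμ : ∀ (i j : ZMod 2), ∀ x ∈ 𝒜 i, ∀ y ∈ 𝒜 j, μ x y ∈ 𝒜 (i + j))
    (hαe : ∀ (i : ZMod 2), ∀ x ∈ 𝒜 i, α x ∈ 𝒜 i)
    (hβe : ∀ (i : ZMod 2), ∀ x ∈ 𝒜 i, β x ∈ 𝒜 i)
    (hco : ∀ a : V, α (β a) = β (α a))
    (hαm : ∀ a b : V, α (μ a b) = μ (α a) (α b))
    (hβm : ∀ a b : V, β (μ a b) = μ (β a) (β b)) :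
    ∀ (i j l : ZMod 2), ∀ x ∈ 𝒜 i, ∀ y ∈ 𝒜 j, ∀ z ∈ 𝒜 l,
      ((-1 : K) ^ (i.val * l.val)) •
          superComm μ α β i (j + l) (β (β x)) (superComm μ α β j l (β y) (α z))
        + ((-1 : K) ^ (j.val * i.val)) •
          superComm μ α β j (l + i) (β (β y)) (superComm μ α β l i (β z) (α x))
        + ((-1 : K) ^ (l.val * j.val)) •
          superComm μ α β l (i + j) (β (β z)) (superComm μ α β i j (β x) (α y))
      = ((-1 : K) ^ (i.val * l.val)) • biAssoc μ α β (α.symm (β (β x))) (β y) (α z)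
        + ((-1 : K) ^ (i.val * j.val)) • biAssoc μ α β (α.symm (β (β y))) (β z) (α x)
        + ((-1 : K) ^ (l.val * j.val)) • biAssoc μ α β (α.symm (β (β z))) (β x) (α y)
        - ((-1 : K) ^ (i.val * l.val + l.val * j.val)) •
            biAssoc μ α β (α.symm (β (β x))) (β z) (α y)
        - ((-1 : K) ^ (i.val * j.val + l.val * j.val)) •
            biAssoc μ α β (α.symm (β (β z))) (β y) (α x)
        - ((-1 : K) ^ (i.val * j.val + l.val * i.val)) •
            biAssoc μ α β (α.symm (β (β y))) (β x) (α z) := by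
  intro i j l x _ y _ z _
  exact jacobi_sum_eq_associator_sum_general hco hαm hβm i j l x y z
end

section
/- Let (L, [·,·], α, β) be a BiHom-Lie superalgebra over a field k with α and β bijective, let k ≥ 0 be an integer, and let a ∈ L be a homogeneous element satisfying α(a) = a = β(a). Define ad_k(a) : L → L by ad_k(a)(x) = [a, β^k(x)]. Then ad_k(a) is a β^{k+1}-derivation of L of parity |a|; that is, ad_k(a) commutes with α and β and satisfies ad_k(a)[x, y] = [ad_k(a)(x), β^{k+1}(y)] + (−1)^{|x||a|}[β^{k+1}(x), ad_k(a)(y)] for all homogeneous x, y ∈ L. (Proposition 4.5) -/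
/-- `βpow βm t` is `βm ^ t` for `t ≥ 0` and the zero map for `t < 0`
(the convention `β^{−1} = 0`, `β⁰ = id`). -/
noncomputable def betaPow {K : Type*} [Field K] {L : Type*} [AddCommGroup L] [Module K L]
    (βm : L →ₗ[K] L) (t : ℤ) : L →ₗ[K] L :=
  if t < 0 then 0 else βm ^ t.toNat

/-- `D` is a `β^t`-derivation of parity `d` of the BiHom-Lie superalgebra
`(L, b, α, βm)` graded by `𝒜`: `D` commutes with `α` and `βm`, is homogeneous of
parity `d`, and satisfies
`D[x, y] = [D(x), β^t(y)] + (−1)^{|x||D|}[β^t(x), D(y)]` on homogeneous elements. -/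
noncomputable def IsBetaDeriv {K : Type*} [Field K] {L : Type*} [AddCommGroup L] [Module K L]
    (𝒜 : ZMod 2 → Submodule K L) (b : L →ₗ[K] L →ₗ[K] L)
    (α βm : L →ₗ[K] L) (t : ℤ) (d : ZMod 2) (D : L →ₗ[K] L) : Prop :=
  (∀ x : L, D (α x) = α (D x)) ∧ (∀ x : L, D (βm x) = βm (D x)) ∧
  (∀ i : ZMod 2, ∀ x ∈ 𝒜 i, D x ∈ 𝒜 (i + d)) ∧
  (∀ (i j : ZMod 2), ∀ x ∈ 𝒜 i, ∀ y ∈ 𝒜 j,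
    D (b x y) = b (D x) (betaPow βm t y)
      + ((-1 : K) ^ (i.val * d.val)) • b (betaPow βm t x) (D y))

/-!
When `α a = a = β a`, skew-supersymmetry turns the BiHom-superJacobi identity for `a`, `u`, `v` into
the Leibniz rule for `[a, ·]` at the pair `β u`, `α v`; the signs match because `(-1) ^ (|x| |y|)`
is bimultiplicative in the parities. Even surjections are surjective in each parity, so the rule
holds for all homogeneous pairs. Applied to `β ^ n x`, `β ^ n y` it is the Leibniz rule
for `ad_n a`.
-/

section Decomposition

variable {ι M N σ τ F : Type*} [DecidableEq ι] [AddCommMonoid M] [AddCommMonoid N]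
  [SetLike σ M] [AddSubmonoidClass σ M] [SetLike τ N] [AddSubmonoidClass τ N]
  (ℳ : ι → σ) (𝒩 : ι → τ) [DirectSum.Decomposition ℳ] [DirectSum.Decomposition 𝒩]
  [FunLike F M N] [AddMonoidHomClass F M N] {f : F}

theorem coe_decompose_map_of_forall_mem (hf : ∀ i, ∀ x ∈ ℳ i, f x ∈ 𝒩 i) (i : ι) (x : M) :
    (DirectSum.decompose 𝒩 (f x) i : N) = f (DirectSum.decompose ℳ x i) := by
  induction x using DirectSum.Decomposition.inductionOn ℳ with
  | zero => simp
  | @homogeneous j m =>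
    obtain rfl | hji := eq_or_ne j i
    · rw [DirectSum.decompose_of_mem_same 𝒩 (hf _ _ m.2), DirectSum.decompose_of_mem_same ℳ m.2]
    · rw [DirectSum.decompose_of_mem_ne 𝒩 (hf _ _ m.2) hji,
        DirectSum.decompose_of_mem_ne ℳ m.2 hji, map_zero]
  | add x y hx hy => simp [hx, hy]

theorem surjOn_component_of_surjective (hf : ∀ i, ∀ x ∈ ℳ i, f x ∈ 𝒩 i)
    (hsurj : Function.Surjective f) (i : ι) : Set.SurjOn f (ℳ i) (𝒩 i) := by
  intro y hy
  obtain ⟨x, rfl⟩ := hsurj y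
  refine ⟨DirectSum.decompose ℳ x i, SetLike.coe_mem _, ?_⟩
  rw [← coe_decompose_map_of_forall_mem ℳ 𝒩 hf, DirectSum.decompose_of_mem_same 𝒩 hy]

end Decomposition

section KoszulSign

variable (R : Type*) [Ring R]

/-- The Koszul sign `(-1) ^ (|x| |y|)` of elements of parities `i = |x|` and `j = |y|`, with
parities represented in `{0, 1}`. -/
def koszulSign (i j : ZMod 2) : R :=
  (-1) ^ (i.val * j.val)

theorem koszulSign_comm (i j : ZMod 2) : koszulSign R i j = koszulSign R j i := by
  rw [koszulSign, koszulSign, mul_comm]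

theorem koszulSign_mul_self (i j : ZMod 2) : koszulSign R i j * koszulSign R i j = 1 := by
  rw [koszulSign, ← sq, pow_right_comm, neg_one_sq, one_pow]

theorem isUnit_koszulSign (i j : ZMod 2) : IsUnit (koszulSign R i j) :=
  isUnit_neg_one.pow _

theorem koszulSign_add_left (i j l : ZMod 2) :
    koszulSign R (i + j) l = koszulSign R i l * koszulSign R j l := by
  rw [koszulSign, ZMod.val_add, pow_mul, ← neg_one_pow_eq_pow_mod_two, ← pow_mul, add_mul, pow_add,
    koszulSign, koszulSign]

end KoszulSign

section BiHomLieSuperalgebra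

variable {R L : Type*} [CommRing R] [AddCommGroup L] [Module R L]

/-- The axioms of a BiHom-Lie superalgebra with bracket `b` and structure maps `α`, `β`, on a module
with homogeneous parts `𝒜 0` and `𝒜 1`. That these decompose the module is not part of the
predicate: it is an instance of `DirectSum.Decomposition 𝒜`. -/
structure IsBiHomLieSuperalgebra (𝒜 : ZMod 2 → Submodule R L) (b : L →ₗ[R] L →ₗ[R] L)
    (α β : L →ₗ[R] L) : Prop where
  bracket_mem : ∀ i j, ∀ x ∈ 𝒜 i, ∀ y ∈ 𝒜 j, b x y ∈ 𝒜 (i + j)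
  alpha_mem : ∀ i, ∀ x ∈ 𝒜 i, α x ∈ 𝒜 i
  beta_mem : ∀ i, ∀ x ∈ 𝒜 i, β x ∈ 𝒜 i
  alpha_beta : ∀ x, α (β x) = β (α x)
  alpha_bracket : ∀ x y, α (b x y) = b (α x) (α y)
  beta_bracket : ∀ x y, β (b x y) = b (β x) (β y)
  skew : ∀ i j, ∀ x ∈ 𝒜 i, ∀ y ∈ 𝒜 j, b (β x) (α y) = -(koszulSign R i j • b (β y) (α x))
  jacobi : ∀ i j l, ∀ x ∈ 𝒜 i, ∀ y ∈ 𝒜 j, ∀ z ∈ 𝒜 l,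
    koszulSign R i l • b (β (β x)) (b (β y) (α z))
      + koszulSign R j i • b (β (β y)) (b (β z) (α x))
      + koszulSign R l j • b (β (β z)) (b (β x) (α y)) = 0

/-- A `β ^ k`-derivation of parity `d`, for `k : ℕ`. This is `IsBetaDeriv` over a commutative ring,
without the convention for `k = -1`. -/
structure IsBetaPowDerivation (𝒜 : ZMod 2 → Submodule R L) (b : L →ₗ[R] L →ₗ[R] L)
    (α β : L →ₗ[R] L) (k : ℕ) (d : ZMod 2) (D : L →ₗ[R] L) : Prop where
  map_alpha : ∀ x, D (α x) = α (D x)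
  map_beta : ∀ x, D (β x) = β (D x)
  map_mem : ∀ i, ∀ x ∈ 𝒜 i, D x ∈ 𝒜 (i + d)
  leibniz : ∀ i j, ∀ x ∈ 𝒜 i, ∀ y ∈ 𝒜 j,
    D (b x y) = b (D x) ((β ^ k) y) + koszulSign R i d • b ((β ^ k) x) (D y)

namespace IsBiHomLieSuperalgebra

variable {𝒜 : ZMod 2 → Submodule R L} {b : L →ₗ[R] L →ₗ[R] L} {α β : L →ₗ[R] L}
  {i j p : ZMod 2} {a u v x y : L}

theorem leibniz_bracket_beta_alpha (h : IsBiHomLieSuperalgebra 𝒜 b α β)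
    (ha : a ∈ 𝒜 p) (hαa : α a = a) (hβa : β a = a) (hu : u ∈ 𝒜 i) (hv : v ∈ 𝒜 j) :
    b a (b (β u) (α v)) = b (b a (β u)) (β (α v))
      + koszulSign R i p • b (β (β u)) (b a (α v)) := by
  have jacobi_auv := h.jacobi p i j a ha u hu v hv
  have skew_va : b (β v) a = -(koszulSign R p j • b a (α v)) := by
    simpa only [hαa, hβa, koszulSign_comm R j p] using h.skew j p v hv a ha
  have skew_v_au : b (β (β v)) (b a (α u)) =
      -((koszulSign R p j * koszulSign R i j) • b (b a (β u)) (β (α v))) := by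
    simpa only [h.alpha_bracket, h.beta_bracket, hαa, hβa, h.alpha_beta,
      koszulSign_comm R j (p + i), koszulSign_add_left] using
      h.skew j (p + i) (β v) (h.beta_mem j v hv) (b a u) (h.bracket_mem p i a ha u hu)
  have sign_v_au : koszulSign R i j * (koszulSign R p j * koszulSign R i j) = koszulSign R p j := by
    rw [mul_left_comm, koszulSign_mul_self, mul_one]
  rw [hαa, hβa, hβa, skew_va, skew_v_au, map_neg, map_smul, koszulSign_comm R j i, smul_neg,
    smul_neg, smul_smul (koszulSign R i j), sign_v_au] at jacobi_auv
  refine (isUnit_koszulSign R p j).smul_left_cancel.1 ?_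
  linear_combination (norm := module) jacobi_auv

theorem leibniz_bracket_of_surjective [DirectSum.Decomposition 𝒜]
    (h : IsBiHomLieSuperalgebra 𝒜 b α β)
    (hα : Function.Surjective α) (hβ : Function.Surjective β)
    (ha : a ∈ 𝒜 p) (hαa : α a = a) (hβa : β a = a) (hx : x ∈ 𝒜 i) (hy : y ∈ 𝒜 j) :
    b a (b x y) = b (b a x) (β y) + koszulSign R i p • b (β x) (b a y) := by
  obtain ⟨u, hu, rfl⟩ := surjOn_component_of_surjective 𝒜 𝒜 h.beta_mem hβ i hx
  obtain ⟨v, hv, rfl⟩ := surjOn_component_of_surjective 𝒜 𝒜 h.alpha_mem hα j hy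
  exact h.leibniz_bracket_beta_alpha ha hαa hβa hu hv

theorem beta_pow_mem (h : IsBiHomLieSuperalgebra 𝒜 b α β) (n : ℕ) (hx : x ∈ 𝒜 i) :
    (β ^ n) x ∈ 𝒜 i :=
  (𝒜 i).le_comap_pow_of_le_comap (h.beta_mem i) n hx

theorem alpha_beta_pow (h : IsBiHomLieSuperalgebra 𝒜 b α β) (n : ℕ) (x : L) :
    α ((β ^ n) x) = (β ^ n) (α x) :=
  have comm : Commute α β := LinearMap.ext h.alpha_beta
  LinearMap.congr_fun (comm.pow_right n) x

theorem beta_pow_bracket (h : IsBiHomLieSuperalgebra 𝒜 b α β) (n : ℕ) (x y : L) :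
    (β ^ n) (b x y) = b ((β ^ n) x) ((β ^ n) y) := by
  have semiconj : Function.Semiconj₂ β (b · ·) (b · ·) := h.beta_bracket
  simpa only [Module.End.coe_pow] using semiconj.iterate n x y

end IsBiHomLieSuperalgebra

theorem ad_is_inner_derivation_general {𝒜 : ZMod 2 → Submodule R L} [DirectSum.Decomposition 𝒜]
    {b : L →ₗ[R] L →ₗ[R] L} {α β : L →ₗ[R] L} (h : IsBiHomLieSuperalgebra 𝒜 b α β)
    (hα : Function.Surjective α) (hβ : Function.Surjective β) (n : ℕ) {p : ZMod 2} {a : L}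
    (ha : a ∈ 𝒜 p) (hαa : α a = a) (hβa : β a = a) :
    IsBetaPowDerivation 𝒜 b α β (n + 1) p (b a ∘ₗ β ^ n) where
  map_alpha x := by
    rw [LinearMap.comp_apply, LinearMap.comp_apply, h.alpha_bracket, hαa, h.alpha_beta_pow]
  map_beta x := by
    rw [LinearMap.comp_apply, LinearMap.comp_apply, h.beta_bracket, hβa]
    exact congrArg (b a) (LinearMap.congr_fun (Commute.pow_self β n).eq x)
  map_mem i x hx := by
    rw [add_comm]
    exact h.bracket_mem p i a ha _ (h.beta_pow_mem n hx)
  leibniz i j x hx y hy := by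
    simp only [LinearMap.comp_apply, h.beta_pow_bracket, pow_succ', Module.End.mul_apply]
    exact h.leibniz_bracket_of_surjective hα hβ ha hαa hβa
      (h.beta_pow_mem n hx) (h.beta_pow_mem n hy)

end BiHomLieSuperalgebra

section Field

variable {K L : Type*} [Field K] [AddCommGroup L] [Module K L]

theorem betaPow_natCast (β : L →ₗ[K] L) (n : ℕ) : betaPow β n = β ^ n := by
  simp [betaPow]

theorem isBetaDeriv_natCast_iff {𝒜 : ZMod 2 → Submodule K L} {b : L →ₗ[K] L →ₗ[K] L}
    {α β : L →ₗ[K] L} {k : ℕ} {d : ZMod 2} {D : L →ₗ[K] L} :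
    IsBetaDeriv 𝒜 b α β k d D ↔ IsBetaPowDerivation 𝒜 b α β k d D := by
  rw [IsBetaDeriv, betaPow_natCast]
  exact ⟨fun ⟨hα, hβ, hmem, hleib⟩ ↦ ⟨hα, hβ, hmem, hleib⟩,
    fun hD ↦ ⟨hD.map_alpha, hD.map_beta, hD.map_mem, hD.leibniz⟩⟩

end Field

/-- **Proposition 4.5.** Let `(L, [·,·], α, β)` be a BiHom-Lie superalgebra with
bijective `α`, `β`, let `n ≥ 0` and let `a ∈ L` be homogeneous of parity `p` with
`α(a) = a = β(a)`.  Then `ad_n(a) : x ↦ [a, β^n(x)]` is a `β^{n+1}`-derivation of `L`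
of parity `|a| = p` (the inner `β^{n+1}`-derivation). -/
theorem ad_is_inner_derivation
    (K : Type*) [Field K] (L : Type*) [AddCommGroup L] [Module K L]
    (𝒜 : ZMod 2 → Submodule K L) [DirectSum.Decomposition 𝒜]
    (b : L →ₗ[K] L →ₗ[K] L) (α βm : L →ₗ[K] L)
    (hαbij : Function.Bijective α) (hβbij : Function.Bijective βm)
    (hb : ∀ (i j : ZMod 2), ∀ x ∈ 𝒜 i, ∀ y ∈ 𝒜 j, b x y ∈ 𝒜 (i + j))
    (hαe : ∀ (i : ZMod 2), ∀ x ∈ 𝒜 i, α x ∈ 𝒜 i)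
    (hβe : ∀ (i : ZMod 2), ∀ x ∈ 𝒜 i, βm x ∈ 𝒜 i)
    (hco : ∀ x : L, α (βm x) = βm (α x))
    (hαh : ∀ x y : L, α (b x y) = b (α x) (α y))
    (hβh : ∀ x y : L, βm (b x y) = b (βm x) (βm y))
    (hskew : ∀ (i j : ZMod 2), ∀ x ∈ 𝒜 i, ∀ y ∈ 𝒜 j,
      b (βm x) (α y) = -(((-1 : K) ^ (i.val * j.val)) • b (βm y) (α x)))
    (hjac : ∀ (i j l : ZMod 2), ∀ x ∈ 𝒜 i, ∀ y ∈ 𝒜 j, ∀ z ∈ 𝒜 l,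
      ((-1 : K) ^ (i.val * l.val)) • b (βm (βm x)) (b (βm y) (α z))
        + ((-1 : K) ^ (j.val * i.val)) • b (βm (βm y)) (b (βm z) (α x))
        + ((-1 : K) ^ (l.val * j.val)) • b (βm (βm z)) (b (βm x) (α y)) = 0)
    (n : ℕ) (p : ZMod 2) (a : L) (ha : a ∈ 𝒜 p)
    (hαa : α a = a) (hβa : βm a = a) :
    IsBetaDeriv 𝒜 b α βm ((n : ℤ) + 1) p ((b a) ∘ₗ betaPow βm (n : ℤ)) := by
  rw [betaPow_natCast]
  exact (isBetaDeriv_natCast_iff (k := n + 1)).2 <|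
    ad_is_inner_derivation_general ⟨hb, hαe, hβe, hco, hαh, hβh, hskew, hjac⟩
      hαbij.surjective hβbij.surjective n ha hαa hβa
end
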